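/- Every projective object P of C_k admits a Z-filtration: there is a chain of graded U-submodules 0 = P_0 ⊂ P_1 ⊂ ⋯ ⊂ P_r = P such that each successive quotient P_i/P_{i−1} is isomorphic in C_k to a Verma module Z(μ_i) for some μ_i ∈ ℤ^θ. -/

import Mathlib

open scoped TensorProduct

/-- The data of a `ℤ^θ`-graded algebra over `k` with a triangular decomposition
`U⁻ ⊗ U⁰ ⊗ U⁺ ≃ U` satisfying the axioms of Andersen–Jantzen–Soergel, together with
the character-twist `μ ↦ μ̃` and the base algebra map `π : U⁰ → k`. -/
structure AJSCtx (k : Type) [Field k] (θ : ℕ) where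
  /-- the underlying algebra -/
  U : Type
  [ringU : Ring U]
  [algU : Algebra k U]
  /-- the `ℤ^θ`-grading of `U` -/
  grade : (Fin θ → ℤ) → Submodule k U
  internal : DirectSum.IsInternal grade
  one_mem : (1 : U) ∈ grade 0
  mul_mem : ∀ {ν μ : Fin θ → ℤ} {a b : U}, a ∈ grade ν → b ∈ grade μ → a * b ∈ grade (ν + μ)
  /-- the negative part `U⁻` -/
  Um : Subalgebra k U
  /-- the zero part `U⁰` -/
  U0 : Subalgebra k U
  /-- the positive part `U⁺` -/
  Up : Subalgebra k U
  Um_graded : Subalgebra.toSubmodule Um = ⨆ ν, Subalgebra.toSubmodule Um ⊓ grade ν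
  U0_graded : Subalgebra.toSubmodule U0 = ⨆ ν, Subalgebra.toSubmodule U0 ⊓ grade ν
  Up_graded : Subalgebra.toSubmodule Up = ⨆ ν, Subalgebra.toSubmodule Up ⊓ grade ν
  /-- multiplication induces a linear isomorphism `U⁻ ⊗ U⁰ ⊗ U⁺ → U` -/
  triangular :
    Function.Bijective
      (TensorProduct.lift
        ((LinearMap.mul k U).compl₁₂ Um.val.toLinearMap
          (TensorProduct.lift
            ((LinearMap.mul k U).compl₁₂ U0.val.toLinearMap Up.val.toLinearMap))))
  U0_deg0 : Subalgebra.toSubmodule U0 ≤ grade 0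
  Up_deg0 : Subalgebra.toSubmodule Up ⊓ grade 0 = Submodule.span k {1}
  Um_deg0 : Subalgebra.toSubmodule Um ⊓ grade 0 = Submodule.span k {1}
  Up_pos : ∀ ν : Fin θ → ℤ, Subalgebra.toSubmodule Up ⊓ grade ν ≠ ⊥ → 0 ≤ ν
  Um_neg : ∀ ν : Fin θ → ℤ, Subalgebra.toSubmodule Um ⊓ grade ν ≠ ⊥ → ν ≤ 0
  finUp : FiniteDimensional k Up
  finUm : FiniteDimensional k Um
  commU0 : ∀ s t : U0, s * t = t * s
  /-- the group homomorphism `μ ↦ μ̃` into algebra automorphisms of `U⁰` -/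
  tilde : (Fin θ → ℤ) → (U0 ≃ₐ[k] U0)
  tilde_zero : tilde 0 = AlgEquiv.refl
  tilde_add : ∀ μ ν : Fin θ → ℤ, tilde (μ + ν) = (tilde μ).trans (tilde ν)
  tilde_comm : ∀ (μ : Fin θ → ℤ), ∀ u ∈ grade μ, ∀ s : U0, (s : U) * u = u * ((tilde μ s : U))
  /-- the algebra map `π : U⁰ → k` -/
  π : U0 →ₐ[k] k

attribute [instance] AJSCtx.ringU AJSCtx.algU

variable {k : Type} [Field k] {θ : ℕ}

/-- An object of the category `C_k`: a finite-dimensional `ℤ^θ`-graded `U`-module `M`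
with `s·m = π(μ̃(s))·m` for `s ∈ U⁰` and `m ∈ M` homogeneous of degree `μ`. -/
structure CMod (C : AJSCtx k θ) where
  /-- the underlying space -/
  M : Type
  [acg : AddCommGroup M]
  [modk : Module k M]
  /-- the action of `U`, as a representation `U → End_k(M)` -/
  ρ : C.U →ₐ[k] Module.End k M
  /-- the `ℤ^θ`-grading of `M` -/
  grM : (Fin θ → ℤ) → Submodule k M
  internal : DirectSum.IsInternal grM
  fin : FiniteDimensional k M
  act_graded : ∀ (ν μ : Fin θ → ℤ) (u : C.U) (m : M),
    u ∈ C.grade ν → m ∈ grM μ → ρ u m ∈ grM (ν + μ)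
  act_U0 : ∀ (s : C.U0) (μ : Fin θ → ℤ) (m : M),
    m ∈ grM μ → ρ (s : C.U) m = C.π (C.tilde μ s) • m

attribute [instance] CMod.acg CMod.modk CMod.fin

variable {C : AJSCtx k θ}

/-- A submodule is graded if it is the sum of its homogeneous components. -/
def CMod.gradedSub (A : CMod C) (p : Submodule k A.M) : Prop :=
  p = ⨆ ν, p ⊓ A.grM ν

/-- A submodule stable under the `U`-action. -/
def CMod.stable (A : CMod C) (p : Submodule k A.M) : Prop :=
  ∀ u : C.U, ∀ m ∈ p, A.ρ u m ∈ p

/-- Morphisms in `C_k`: `U`-equivariant degree-preserving `k`-linear maps. -/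
def IsCHom (A B : CMod C) (f : A.M →ₗ[k] B.M) : Prop :=
  (∀ (u : C.U) (m : A.M), f (A.ρ u m) = B.ρ u (f m)) ∧
  (∀ ν : Fin θ → ℤ, ∀ m ∈ A.grM ν, f m ∈ B.grM ν)

/-- The space `Hom_{C_k}(A, B)` as a `k`-submodule of the linear maps. -/
def homC (A B : CMod C) : Submodule k (A.M →ₗ[k] B.M) where
  carrier := {f | IsCHom A B f}
  add_mem' := by
    rintro f g ⟨hf1, hf2⟩ ⟨hg1, hg2⟩
    refine ⟨fun u m => ?_, fun ν m hm => Submodule.add_mem _ (hf2 ν m hm) (hg2 ν m hm)⟩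
    simp [LinearMap.add_apply, hf1 u m, hg1 u m, map_add]
  zero_mem' := by
    refine ⟨fun u m => ?_, fun ν m hm => Submodule.zero_mem _⟩
    simp
  smul_mem' := by
    rintro c f ⟨hf1, hf2⟩
    refine ⟨fun u m => ?_, fun ν m hm => Submodule.smul_mem _ _ (hf2 ν m hm)⟩
    simp [LinearMap.smul_apply, hf1 u m, map_smul]

/-- The linear map `U → M`, `u ↦ u·m`. -/
def actVec (A : CMod C) (m : A.M) : C.U →ₗ[k] A.M where
  toFun u := A.ρ u m
  map_add' a b := by simp [map_add]
  map_smul' c a := by simp [map_smul]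

/-- `v` is a highest-weight vector of weight `μ`: it is homogeneous of degree `μ` and is
annihilated by every homogeneous element of `U⁺` of nonzero degree. -/
def IsHWvec (A : CMod C) (μ : Fin θ → ℤ) (v : A.M) : Prop :=
  v ∈ A.grM μ ∧
  ∀ ν : Fin θ → ℤ, ν ≠ 0 → ∀ u ∈ Subalgebra.toSubmodule C.Up ⊓ C.grade ν, A.ρ u v = 0

/-- A simple object of `C_k`. -/
def CMod.IsSimpleObj (A : CMod C) : Prop :=
  (∃ m : A.M, m ≠ 0) ∧
  ∀ p : Submodule k A.M, A.gradedSub p → A.stable p → p = ⊥ ∨ p = ⊤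

/-- `A` is (isomorphic to) the simple module `L(μ)`: it is simple and has a nonzero
highest-weight vector of weight `μ`. -/
def IsHWSimple (μ : Fin θ → ℤ) (A : CMod C) : Prop :=
  A.IsSimpleObj ∧ ∃ v : A.M, v ≠ 0 ∧ IsHWvec A μ v

/-- `Z` together with `m ∈ Z` is (a realization of) the Verma module `Z(μ)`:
`m` is a highest-weight vector of weight `μ` and the action map `U⁻ → Z`, `a ↦ a·m`,
is a linear isomorphism. -/
def IsVerma (μ : Fin θ → ℤ) (Z : CMod C) (m : Z.M) : Prop :=
  IsHWvec Z μ m ∧ Function.Bijective ((actVec Z m).comp C.Um.val.toLinearMap)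

/-- Isomorphism in `C_k`. -/
def CIso (A B : CMod C) : Prop :=
  ∃ f : A.M →ₗ[k] B.M, IsCHom A B f ∧ Function.Bijective f

/-- The subquotient `p/q` of `A` is isomorphic in `C_k` to `B`: there is a surjective
`U`-equivariant degree-preserving linear map `p → B` whose kernel is exactly `q`. -/
def SubquotIso (A : CMod C) (p q : Submodule k A.M) (B : CMod C) : Prop :=
  ∃ f : ↥p →ₗ[k] B.M,
    Function.Surjective f ∧
    (∀ x : ↥p, f x = 0 ↔ (x : A.M) ∈ q) ∧
    (∀ (u : C.U) (x : ↥p) (h : A.ρ u (x : A.M) ∈ p), f ⟨A.ρ u (x : A.M), h⟩ = B.ρ u (f x)) ∧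
    (∀ (ν : Fin θ → ℤ) (x : ↥p), (x : A.M) ∈ A.grM ν → f x ∈ B.grM ν)

/-- A composition series of `A` in `C_k` (by graded `U`-submodules with simple
subquotients). -/
structure IsCompSeries (A : CMod C) (r : ℕ) (F : Fin (r + 1) → Submodule k A.M) : Prop where
  mono : Monotone F
  bot : F 0 = ⊥
  top : F (Fin.last r) = ⊤
  graded : ∀ i, A.gradedSub (F i)
  stable : ∀ i, A.stable (F i)
  simpleQuot : ∀ i : Fin r, ∃ S : CMod C,
    S.IsSimpleObj ∧ SubquotIso A (F i.succ) (F i.castSucc) S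

/-- `[A : L] = n`: some (equivalently, by Jordan–Hölder, any) composition series of `A`
has exactly `n` factors isomorphic to `L`. -/
def HasMult (A L : CMod C) (n : ℕ) : Prop :=
  ∃ (r : ℕ) (F : Fin (r + 1) → Submodule k A.M), IsCompSeries A r F ∧
    n = Nat.card {i : Fin r // SubquotIso A (F i.succ) (F i.castSucc) L}

/-- Projective object of `C_k`. -/
def CProjective (P : CMod C) : Prop :=
  ∀ (A B : CMod C) (g : A.M →ₗ[k] B.M), IsCHom A B g → Function.Surjective g →
    ∀ f : P.M →ₗ[k] B.M, IsCHom P B f →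
      ∃ h : P.M →ₗ[k] A.M, IsCHom P A h ∧ g ∘ₗ h = f

/-- A simple (graded, `U`-stable) submodule. -/
def CMod.IsSimpleSub (A : CMod C) (p : Submodule k A.M) : Prop :=
  p ≠ ⊥ ∧ A.gradedSub p ∧ A.stable p ∧
    ∀ q ≤ p, A.gradedSub q → A.stable q → q = ⊥ ∨ q = p

/-- The socle: the sum of all simple graded `U`-submodules. -/
def csocle (A : CMod C) : Submodule k A.M :=
  sSup {p : Submodule k A.M | A.IsSimpleSub p}

/-- The antiautomorphism `τ` of `U`. -/
structure TauData (C : AJSCtx k θ) where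
  /-- the antiautomorphism, as a linear map -/
  τ : C.U →ₗ[k] C.U
  τ_one : τ 1 = 1
  τ_mul : ∀ a b : C.U, τ (a * b) = τ b * τ a
  τ_invol : ∀ a : C.U, τ (τ a) = a
  τ_fix : ∀ s : C.U0, τ (s : C.U) = (s : C.U)
  τ_Up : Submodule.map τ (Subalgebra.toSubmodule C.Up) = Subalgebra.toSubmodule C.Um
  τ_deg : ∀ ν : Fin θ → ℤ, ∀ u ∈ C.grade ν, τ u ∈ C.grade (-ν)

/-- `B` is (a realization of) the `τ`-twisted dual `A^τ`: there is a perfect pairing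
`B × A → k`, vanishing between distinct homogeneous components, with
`⟨u·b, a⟩ = ⟨b, τ(u)·a⟩`. -/
def IsTauDual (T : TauData C) (A B : CMod C) : Prop :=
  ∃ pr : B.M →ₗ[k] A.M →ₗ[k] k,
    Function.Bijective pr ∧
    (∀ (u : C.U) (b : B.M) (a : A.M), pr (B.ρ u b) a = pr b (A.ρ (T.τ u) a)) ∧
    (∀ lam ν : Fin θ → ℤ, lam ≠ ν → ∀ b ∈ B.grM lam, ∀ a ∈ A.grM ν, pr b a = 0)

/-- The sum of all graded `U`-submodules `N` of `Z` with `N_μ = 0`. -/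
def vermaRad (Z : CMod C) (μ : Fin θ → ℤ) : Submodule k Z.M :=
  sSup {N : Submodule k Z.M | Z.gradedSub N ∧ Z.stable N ∧ N ⊓ Z.grM μ = ⊥}

/-!
Coinduction from `U⁻U⁰` to `U` is right adjoint to restriction, and because `U` is free over `U⁻U⁰`
by the triangular decomposition, it turns surjections of graded `U⁻`-modules into surjections in
`C_k`. Hence a projective object `P` of `C_k` remains projective as a graded `U⁻`-module.

Let `F` be a graded `U`-submodule such that `P / F` is projective over `U⁻`, let `μ` be maximal
among the weights of `P / F`, and let `v ∈ P_μ` lie outside `F`. By maximality of `μ`, a functional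
that kills `F` and all other weight spaces and sends `v` to `1` is a morphism from `P / F` to the
trivial `U⁻`-module in degree `μ`. Lifting it through `U⁻ → k` gives a retraction `P / F → U⁻` with
`v ↦ 1`. Thus `U⁻ v` is a free direct summand of `P / F`, so the quotient by it is again projective
over `U⁻`. As `U⁰` and `U⁺` act on the class of `v` by scalars, `U⁻ v` is a `U`-submodule of
`P / F`, and it is isomorphic to `Z(μ)`. Enlarging `F` in this way, starting from `0`, must end at
`P` by finite-dimensionality.
-/

/-! ### Graded modules -/

section Graded

open DirectSum (IsInternal)

theorem linearMap_ext_of_iSup_eq_top {ι R M N : Type*} [Semiring R] [AddCommMonoid M] [Module R M]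
    [AddCommMonoid N] [Module R N] {𝒜 : ι → Submodule R M} (h𝒜 : ⨆ i, 𝒜 i = ⊤) {f g : M →ₗ[R] N}
    (h : ∀ i, ∀ x ∈ 𝒜 i, f x = g x) : f = g :=
  LinearMap.eqLocus_eq_top.1 (top_unique (h𝒜 ▸ iSup_le h))

variable {ι R M N : Type*} [AddCommGroup M] [AddCommGroup N]

section Ring

variable [Ring R] [Module R M] [Module R N]

/-- Linear maps sending each homogeneous component into the component of the same degree. -/
def PreservesGrading (𝒜 : ι → Submodule R M) (ℬ : ι → Submodule R N) (f : M →ₗ[R] N) : Prop :=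
  ∀ i, ∀ x ∈ 𝒜 i, f x ∈ ℬ i

theorem mem_of_mem_sup_iSup_ne {𝒜 : ι → Submodule R M} (h𝒜 : iSupIndep 𝒜) {p : Submodule R M}
    (hp : p = ⨆ i, p ⊓ 𝒜 i) {i : ι} {x : M} (hx : x ∈ 𝒜 i) (hx' : x ∈ p ⊔ ⨆ j ≠ i, 𝒜 j) :
    x ∈ p := by
  have hle : p ⊔ ⨆ j ≠ i, 𝒜 j ≤ p ⊓ 𝒜 i ⊔ ⨆ j ≠ i, 𝒜 j := by
    refine sup_le (hp.trans_le (iSup_le fun j => ?_)) le_sup_right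
    rcases eq_or_ne j i with rfl | hj
    · exact le_sup_left
    · exact inf_le_right.trans (le_sup_of_le_right (le_iSup₂_of_le j hj le_rfl))
  obtain ⟨y, hy, z, hz, rfl⟩ := Submodule.mem_sup.1 (hle hx')
  have hz0 : z = 0 := Submodule.disjoint_def.1 (h𝒜 i) z
    (by simpa only [add_sub_cancel_left] using sub_mem hx hy.2) hz
  rw [hz0, add_zero]
  exact hy.1

variable [DecidableEq ι]

theorem isInternal_comap_subtype {p : Submodule R M} {𝒜 : ι → Submodule R M} (h𝒜 : iSupIndep 𝒜)
    (hp : p = ⨆ i, p ⊓ 𝒜 i) : IsInternal fun i => (𝒜 i).comap p.subtype := by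
  rw [DirectSum.isInternal_submodule_iff_iSupIndep_and_iSup_eq_top]
  constructor
  · refine fun i => Submodule.disjoint_def.2 fun x hx hx' => Subtype.ext ?_
    refine Submodule.disjoint_def.1 (h𝒜 i) x hx ?_
    have hle : ⨆ j, ⨆ (_ : j ≠ i), (𝒜 j).comap p.subtype
        ≤ (⨆ j, ⨆ (_ : j ≠ i), 𝒜 j).comap p.subtype :=
      iSup₂_le fun j hj => Submodule.comap_mono (le_iSup₂_of_le j hj le_rfl)
    exact hle hx'
  · apply Submodule.map_injective_of_injective p.injective_subtype
    simpa only [Submodule.map_iSup, Submodule.map_comap_subtype, Submodule.map_subtype_top]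
      using hp.symm

theorem isInternal_map_mkQ {𝒜 : ι → Submodule R M} (h𝒜 : IsInternal 𝒜) {p : Submodule R M}
    (hp : p = ⨆ i, p ⊓ 𝒜 i) : IsInternal fun i => (𝒜 i).map p.mkQ := by
  rw [DirectSum.isInternal_submodule_iff_iSupIndep_and_iSup_eq_top, ← Submodule.map_iSup,
    h𝒜.submodule_iSup_eq_top, Submodule.map_top, Submodule.range_mkQ]
  refine ⟨fun i => Submodule.disjoint_def.2 ?_, rfl⟩
  rintro _ ⟨x, hx, rfl⟩ hx'
  simp only [← Submodule.map_iSup] at hx'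
  obtain ⟨y, hy, hyx⟩ := hx'
  refine (Submodule.Quotient.mk_eq_zero p).2
    (mem_of_mem_sup_iSup_ne h𝒜.submodule_iSupIndep hp hx ?_)
  rw [← sub_add_cancel x y]
  exact Submodule.add_mem_sup ((Submodule.Quotient.eq p).1 hyx.symm) hy

end Ring

section CommRing

variable [CommRing R] [Module R M] [Module R N]

/-- The maps homogeneous of degree `d`. -/
def homDeg [Add ι] (𝒜 : ι → Submodule R M) (ℬ : ι → Submodule R N) (d : ι) :
    Submodule R (M →ₗ[R] N) where
  carrier := {f | ∀ i, ∀ x ∈ 𝒜 i, f x ∈ ℬ (i + d)}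
  add_mem' hf hg i x hx := add_mem (hf i x hx) (hg i x hx)
  zero_mem' _ _ _ := zero_mem _
  smul_mem' c _ hf i x hx := Submodule.smul_mem _ c (hf i x hx)

theorem iSupIndep_homDeg [Add ι] [IsLeftCancelAdd ι] {𝒜 : ι → Submodule R M}
    {ℬ : ι → Submodule R N} (h𝒜 : ⨆ i, 𝒜 i = ⊤) (hℬ : iSupIndep ℬ) :
    iSupIndep (homDeg 𝒜 ℬ) := by
  rw [iSupIndep_iff_finsetSum_eq_zero_imp_eq_zero]
  intro s f hf hsum d hd
  refine linearMap_ext_of_iSup_eq_top h𝒜 fun i x hx => ?_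
  refine (iSupIndep_iff_finsetSum_eq_zero_imp_eq_zero _).1 (hℬ.comp (add_right_injective i)) s
    (fun e => f e x) (fun e he => hf e he i x hx) ?_ d hd
  rw [← LinearMap.sum_apply, hsum, LinearMap.zero_apply]

variable [DecidableEq ι]

/-- The endomorphism acting on the homogeneous component of degree `i` as the scalar `c i`. -/
noncomputable def diagonalEnd {𝒜 : ι → Submodule R M} (h𝒜 : IsInternal 𝒜) (c : ι → R) :
    Module.End R M :=
  DirectSum.toModule R ι M (fun i => c i • (𝒜 i).subtype) ∘ₗ
    (LinearEquiv.ofBijective (DirectSum.coeLinearMap 𝒜) h𝒜).symm.toLinearMap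

theorem diagonalEnd_apply {𝒜 : ι → Submodule R M} (h𝒜 : IsInternal 𝒜) (c : ι → R) {i : ι} {x : M}
    (hx : x ∈ 𝒜 i) : diagonalEnd h𝒜 c x = c i • x := by
  have hsymm : (LinearEquiv.ofBijective (DirectSum.coeLinearMap 𝒜) h𝒜).symm x =
      DirectSum.lof R ι (fun i => 𝒜 i) i ⟨x, hx⟩ :=
    (LinearEquiv.symm_apply_eq _).2 (DirectSum.coeLinearMap_lof 𝒜 i ⟨x, hx⟩).symm
  simp only [diagonalEnd, LinearMap.comp_apply, LinearEquiv.coe_coe, hsymm, DirectSum.toModule_lof,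
    LinearMap.smul_apply, Submodule.subtype_apply]

theorem PreservesGrading.map_diagonalEnd {𝒜 : ι → Submodule R M} {ℬ : ι → Submodule R N}
    {f : M →ₗ[R] N} (hf : PreservesGrading 𝒜 ℬ f) (h𝒜 : IsInternal 𝒜) (hℬ : IsInternal ℬ)
    (c : ι → R) (x : M) : f (diagonalEnd h𝒜 c x) = diagonalEnd hℬ c (f x) := by
  refine LinearMap.congr_fun (f := f ∘ₗ diagonalEnd h𝒜 c) (g := diagonalEnd hℬ c ∘ₗ f)
    (linearMap_ext_of_iSup_eq_top h𝒜.submodule_iSup_eq_top fun i y hy => ?_) x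
  simp only [LinearMap.comp_apply, diagonalEnd_apply _ _ hy, diagonalEnd_apply _ _ (hf i y hy),
    map_smul]

end CommRing

theorem exists_functional_of_notMem {k : Type*} [Field k] [Module k M] {𝒜 : ι → Submodule k M}
    (h𝒜 : iSupIndep 𝒜) {p : Submodule k M} (hp : p = ⨆ i, p ⊓ 𝒜 i) {i : ι} {v : M}
    (hv : v ∈ 𝒜 i) (hvp : v ∉ p) :
    ∃ f : M →ₗ[k] k, f v = 1 ∧ p ≤ LinearMap.ker f ∧ ∀ j ≠ i, 𝒜 j ≤ LinearMap.ker f := by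
  obtain ⟨f, hf, hker⟩ := Submodule.exists_le_ker_of_notMem
    (mt (mem_of_mem_sup_iSup_ne h𝒜 hp hv) hvp)
  have hker' : p ⊔ ⨆ j ≠ i, 𝒜 j ≤ LinearMap.ker ((f v)⁻¹ • f) := fun x hx => by
    rw [LinearMap.mem_ker, LinearMap.smul_apply, LinearMap.mem_ker.1 (hker hx), smul_zero]
  exact ⟨(f v)⁻¹ • f, inv_mul_cancel₀ hf, le_sup_left.trans hker', fun j hj =>
    (le_iSup₂_of_le (f := fun j (_ : j ≠ i) => 𝒜 j) j hj le_rfl).trans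
      (le_sup_right.trans hker')⟩

end Graded

/-! ### Triangular decomposition -/

theorem exists_eq_algebraMap_of_inf_eq_span_one {R A : Type*} [CommSemiring R] [Semiring A]
    [Algebra R A] {S : Subalgebra R A} {p : Submodule R A}
    (h : Subalgebra.toSubmodule S ⊓ p = Submodule.span R {1}) {a : S} (ha : (a : A) ∈ p) :
    ∃ c : R, a = algebraMap R S c := by
  obtain ⟨c, hc⟩ := Submodule.mem_span_singleton.1 (h.le ⟨a.2, ha⟩)
  exact ⟨c, Subtype.ext (by rw [← hc, ← Algebra.algebraMap_eq_smul_one]; rfl)⟩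

namespace AJSCtx

open Subalgebra (toSubmodule)

variable (C)

/-- The multiplication map `U⁰ ⊗ U⁺ → U`. -/
def mulU0Up : C.U0 ⊗[k] C.Up →ₗ[k] C.U :=
  TensorProduct.lift ((LinearMap.mul k C.U).compl₁₂ C.U0.val.toLinearMap C.Up.val.toLinearMap)

theorem range_mulU0Up :
    LinearMap.range C.mulU0Up = toSubmodule C.U0 * toSubmodule C.Up :=
  Submodule.mulMap_range (toSubmodule C.U0) (toSubmodule C.Up)

theorem Um_mul_U0_mul_Up_eq_top :
    toSubmodule C.Um * (toSubmodule C.U0 * toSubmodule C.Up) = ⊤ := by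
  refine Submodule.eq_top_iff'.2 fun u => ?_
  obtain ⟨t, rfl⟩ := C.triangular.2 u
  induction t with
  | zero => rw [map_zero]; exact zero_mem _
  | add x y hx hy => rw [map_add]; exact add_mem hx hy
  | tmul a t =>
    rw [TensorProduct.lift.tmul]
    exact Submodule.mul_mem_mul a.2 (C.range_mulU0Up ▸ LinearMap.mem_range_self C.mulU0Up t)

theorem U0_mul_Up_inf_grade_le (ν : Fin θ → ℤ) :
    toSubmodule C.U0 * (toSubmodule C.Up ⊓ C.grade ν) ≤ C.grade ν :=
  Submodule.mul_le.2 fun _ hs _ hb => zero_add ν ▸ C.mul_mem (C.U0_deg0 hs) hb.2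

theorem grade_eq_iSup_mul (ν : Fin θ → ℤ) :
    C.grade ν = ⨆ η, (toSubmodule C.Um ⊓ C.grade η) *
      (toSubmodule C.U0 * (toSubmodule C.Up ⊓ C.grade (ν - η))) := by
  set T := fun ν => ⨆ η, (toSubmodule C.Um ⊓ C.grade η) *
    (toSubmodule C.U0 * (toSubmodule C.Up ⊓ C.grade (ν - η)))
  have hle : T ≤ C.grade := fun ν => iSup_le fun η => Submodule.mul_le.2 fun a ha x hx =>
    add_sub_cancel η ν ▸ C.mul_mem ha.2 (C.U0_mul_Up_inf_grade_le _ hx)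
  have htop : ⨆ ν, T ν = ⊤ := by
    rw [eq_top_iff, ← C.Um_mul_U0_mul_Up_eq_top, C.Um_graded, C.Up_graded, Submodule.mul_iSup,
      Submodule.mul_iSup]
    refine iSup_le fun η' => ?_
    rw [Submodule.iSup_mul]
    refine iSup_le fun η => le_iSup_of_le (η + η') (le_iSup_of_le η ?_)
    rw [add_sub_cancel_left]
  exact congrFun ((C.internal.submodule_iSupIndep.le_iff_eq_of_iSup_eq_top htop).1 hle).symm ν

/-- The component of degree `ν` of `U⁻`. -/
def gradeUm (ν : Fin θ → ℤ) : Submodule k C.Um := (C.grade ν).comap (toSubmodule C.Um).subtype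

/-- The component of degree `ν` of `U⁺`. -/
def gradeUp (ν : Fin θ → ℤ) : Submodule k C.Up := (C.grade ν).comap (toSubmodule C.Up).subtype

theorem isInternal_gradeUm : DirectSum.IsInternal C.gradeUm :=
  isInternal_comap_subtype C.internal.submodule_iSupIndep C.Um_graded

theorem linearMap_ext {N : Type*} [AddCommGroup N] [Module k N] {f g : C.U →ₗ[k] N}
    (h : ∀ ν, ∀ a ∈ C.gradeUm ν, ∀ x ∈ toSubmodule C.U0 * toSubmodule C.Up,
      f (a * x) = g (a * x)) : f = g := by
  refine LinearMap.eqLocus_eq_top.1 (top_unique ?_)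
  rw [← C.Um_mul_U0_mul_Up_eq_top]
  refine Submodule.mul_le.2 fun a ha x hx => ?_
  exact LinearMap.congr_fun (f := f ∘ₗ LinearMap.mulRight k x ∘ₗ (toSubmodule C.Um).subtype)
    (g := g ∘ₗ LinearMap.mulRight k x ∘ₗ (toSubmodule C.Um).subtype)
    (linearMap_ext_of_iSup_eq_top C.isInternal_gradeUm.submodule_iSup_eq_top
      fun ν b hb => h ν b hb x hx) ⟨a, ha⟩

variable {C}

theorem nonpos_of_mem_gradeUm {ν : Fin θ → ℤ} {a : C.Um} (ha : a ∈ C.gradeUm ν) (ha0 : a ≠ 0) :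
    ν ≤ 0 :=
  C.Um_neg ν fun h => ha0 <| Subtype.ext <| (Submodule.eq_bot_iff _).1 h a ⟨a.2, ha⟩

theorem nonneg_of_mem_gradeUp {ν : Fin θ → ℤ} {b : C.Up} (hb : b ∈ C.gradeUp ν) (hb0 : b ≠ 0) :
    0 ≤ ν :=
  C.Up_pos ν fun h => hb0 <| Subtype.ext <| (Submodule.eq_bot_iff _).1 h b ⟨b.2, hb⟩

theorem exists_eq_algebraMap_of_mem_gradeUm_zero {a : C.Um} (ha : a ∈ C.gradeUm 0) :
    ∃ c : k, a = algebraMap k C.Um c :=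
  exists_eq_algebraMap_of_inf_eq_span_one C.Um_deg0 ha

theorem exists_eq_algebraMap_of_mem_gradeUp_zero {b : C.Up} (hb : b ∈ C.gradeUp 0) :
    ∃ c : k, b = algebraMap k C.Up c :=
  exists_eq_algebraMap_of_inf_eq_span_one C.Up_deg0 hb

theorem eq_algebraMap_of_mem_gradeUm_zero (ε : C.Um →ₐ[k] k) {a : C.Um} (ha : a ∈ C.gradeUm 0) :
    a = algebraMap k C.Um (ε a) := by
  obtain ⟨c, rfl⟩ := exists_eq_algebraMap_of_mem_gradeUm_zero ha
  rw [AlgHom.commutes, Algebra.algebraMap_self_apply]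

/-- A character of `U⁻` is an augmentation if it kills all components of nonzero degree. -/
def IsAugmentation (ε : C.Um →ₐ[k] k) : Prop :=
  ∀ ν ≠ 0, ∀ a ∈ C.gradeUm ν, ε a = 0

theorem exists_isAugmentation [Nontrivial C.U] : ∃ ε : C.Um →ₐ[k] k, IsAugmentation ε := by
  have hbot : (⊥ : Submodule k C.Um) = ⨆ ν, ⊥ ⊓ C.gradeUm ν := by
    simp only [bot_inf_eq, iSup_bot]
  have hone : (1 : C.Um) ∈ C.gradeUm 0 := C.one_mem
  obtain ⟨l, hl1, -, hl⟩ := exists_functional_of_notMem C.isInternal_gradeUm.submodule_iSupIndep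
    hbot hone
    (by rw [Submodule.mem_bot]; exact one_ne_zero)
  have hmul : ∀ a b, l (a * b) = l a * l b := fun a b => by
    refine LinearMap.congr_fun₂ (f := (LinearMap.mul k C.Um).compr₂ l)
      (g := (LinearMap.mul k k).compl₁₂ l l)
      (linearMap_ext_of_iSup_eq_top C.isInternal_gradeUm.submodule_iSup_eq_top fun ν a ha => ?_) a b
    refine linearMap_ext_of_iSup_eq_top C.isInternal_gradeUm.submodule_iSup_eq_top fun η b hb => ?_
    change l (a * b) = l a * l b
    rcases eq_or_ne ν 0 with rfl | hν
    · obtain ⟨c, rfl⟩ := exists_eq_algebraMap_of_mem_gradeUm_zero ha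
      rw [← Algebra.smul_def, map_smul, Algebra.algebraMap_eq_smul_one, map_smul, hl1, smul_eq_mul,
        smul_eq_mul, mul_one]
    · rw [hl ν hν ha, zero_mul]
      rcases eq_or_ne a 0 with rfl | ha0
      · rw [zero_mul, map_zero]
      rcases eq_or_ne b 0 with rfl | hb0
      · rw [mul_zero, map_zero]
      refine hl (ν + η) (ne_of_lt ?_) (C.mul_mem ha hb)
      exact add_neg_of_neg_of_nonpos ((nonpos_of_mem_gradeUm ha ha0).lt_of_ne hν)
        (nonpos_of_mem_gradeUm hb hb0)
  exact ⟨AlgHom.ofLinearMap l hl1 hmul, fun ν hν a ha => hl ν hν ha⟩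

end AJSCtx

/-! ### Coinduction -/

/-- A finite-dimensional `ℤ^θ`-graded `U⁻`-module. -/
structure NegMod (C : AJSCtx k θ) where
  /-- the underlying space -/
  M : Type
  [acg : AddCommGroup M]
  [modk : Module k M]
  /-- the action of `U⁻` -/
  ρ : C.Um →ₐ[k] Module.End k M
  /-- the `ℤ^θ`-grading of `M` -/
  gr : (Fin θ → ℤ) → Submodule k M
  internal : DirectSum.IsInternal gr
  fin : FiniteDimensional k M
  act_graded : ∀ {ν μ : Fin θ → ℤ} {a : C.Um} {m : M},
    a ∈ C.gradeUm ν → m ∈ gr μ → ρ a m ∈ gr (ν + μ)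

attribute [instance] NegMod.acg NegMod.modk NegMod.fin

/-- Morphisms of graded `U⁻`-modules. -/
structure IsNegHom (A B : NegMod C) (f : A.M →ₗ[k] B.M) : Prop where
  map_act : ∀ (a : C.Um) (m : A.M), f (A.ρ a m) = B.ρ a (f m)
  map_gr : PreservesGrading A.gr B.gr f

theorem IsNegHom.comp {A B D : NegMod C} {g : B.M →ₗ[k] D.M} {f : A.M →ₗ[k] B.M}
    (hg : IsNegHom B D g) (hf : IsNegHom A B f) : IsNegHom A D (g ∘ₗ f) where
  map_act a m := by rw [LinearMap.comp_apply, hf.map_act, hg.map_act, LinearMap.comp_apply]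
  map_gr ν m hm := hg.map_gr ν _ (hf.map_gr ν m hm)

/-- The restriction of an object of `C_k` to `U⁻`. -/
def CMod.toNegMod (P : CMod C) : NegMod C where
  M := P.M
  ρ := P.ρ.comp C.Um.val
  gr := P.grM
  internal := P.internal
  fin := P.fin
  act_graded ha hm := P.act_graded _ _ _ _ ha hm

namespace NegMod

/-- The action of `U⁰` on a graded `U⁻`-module forced by the definition of `C_k`: on the component
of degree `μ`, `s` acts as the scalar `π(μ̃(s))`. -/
noncomputable def weightAct (N : NegMod C) (s : C.U0) : Module.End k N.M :=
  diagonalEnd N.internal fun μ => C.π (C.tilde μ s)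

theorem weightAct_apply (N : NegMod C) (s : C.U0) {μ : Fin θ → ℤ} {n : N.M} (hn : n ∈ N.gr μ) :
    N.weightAct s n = C.π (C.tilde μ s) • n :=
  diagonalEnd_apply N.internal _ hn

theorem weightAct_act (N : NegMod C) {ν : Fin θ → ℤ} {a : C.Um} (ha : a ∈ C.gradeUm ν)
    (s : C.U0) (n : N.M) :
    N.weightAct s (N.ρ a n) = N.ρ a (N.weightAct (C.tilde ν s) n) := by
  refine LinearMap.congr_fun (f := N.weightAct s ∘ₗ N.ρ a)
    (g := N.ρ a ∘ₗ N.weightAct (C.tilde ν s))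
    (linearMap_ext_of_iSup_eq_top N.internal.submodule_iSup_eq_top fun μ x hx => ?_) n
  simp only [LinearMap.comp_apply, weightAct_apply N _ hx, weightAct_apply N s (N.act_graded ha hx),
    map_smul, C.tilde_add, AlgEquiv.trans_apply]

end NegMod

theorem CMod.act_U0_eq_weightAct (P : CMod C) (s : C.U0) : P.ρ s = P.toNegMod.weightAct s :=
  linearMap_ext_of_iSup_eq_top P.internal.submodule_iSup_eq_top fun μ x hx =>
    (P.act_U0 s μ x hx).trans (P.toNegMod.weightAct_apply s hx).symm

/-- The representation on a stable subspace. -/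
def restrictRep {k A M : Type*} [CommSemiring k] [Semiring A] [Algebra k A] [AddCommMonoid M]
    [Module k M] (ρ : A →ₐ[k] Module.End k M) (p : Submodule k M)
    (hp : ∀ a, ∀ m ∈ p, ρ a m ∈ p) : A →ₐ[k] Module.End k p :=
  AlgHom.ofLinearMap
    { toFun := fun a => (ρ a).restrict (hp a)
      map_add' := fun a b => LinearMap.ext fun x => Subtype.ext <| by
        simp only [map_add, LinearMap.coe_restrict_apply, LinearMap.add_apply, Submodule.coe_add]
      map_smul' := fun c a => LinearMap.ext fun x => Subtype.ext <| by
        simp only [map_smul, LinearMap.coe_restrict_apply, LinearMap.smul_apply, RingHom.id_apply,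
          Submodule.coe_smul] }
    (LinearMap.ext fun x => Subtype.ext <| LinearMap.congr_fun (map_one ρ) x)
    (fun a b => LinearMap.ext fun x => Subtype.ext <| LinearMap.congr_fun (map_mul ρ a b) x)

/-- The representation on the quotient by a stable subspace. -/
def quotientRep {k A M : Type*} [CommRing k] [Ring A] [Algebra k A] [AddCommGroup M] [Module k M]
    (ρ : A →ₐ[k] Module.End k M) (p : Submodule k M) (hp : ∀ a, ∀ m ∈ p, ρ a m ∈ p) :
    A →ₐ[k] Module.End k (M ⧸ p) :=
  AlgHom.ofLinearMap
    { toFun := fun a => p.mapQ p (ρ a) (hp a)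
      map_add' := fun a b => Submodule.linearMap_qext p <| LinearMap.ext fun x =>
        congrArg p.mkQ (LinearMap.congr_fun (map_add ρ a b) x)
      map_smul' := fun c a => Submodule.linearMap_qext p <| LinearMap.ext fun x =>
        congrArg p.mkQ (LinearMap.congr_fun (map_smul ρ c a) x) }
    (Submodule.linearMap_qext p <| LinearMap.ext fun x =>
      congrArg p.mkQ (LinearMap.congr_fun (map_one ρ) x))
    (fun a b => Submodule.linearMap_qext p <| LinearMap.ext fun x =>
      congrArg p.mkQ (LinearMap.congr_fun (map_mul ρ a b) x))

/-- Right translation on functions on an algebra: `(u · φ)(x) = φ(x u)`. -/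
def rightTranslation (k A N : Type*) [CommRing k] [Ring A] [Algebra k A] [AddCommGroup N]
    [Module k N] : A →ₐ[k] Module.End k (A →ₗ[k] N) :=
  AlgHom.ofLinearMap ((LinearMap.llcomp k A A N).flip ∘ₗ (LinearMap.mul k A).flip)
    (LinearMap.ext fun φ => LinearMap.ext fun x => congrArg φ (mul_one x))
    (fun u v => LinearMap.ext fun φ => LinearMap.ext fun x => congrArg φ (mul_assoc x u v).symm)

theorem rightTranslation_apply {k A N : Type*} [CommRing k] [Ring A] [Algebra k A] [AddCommGroup N]
    [Module k N] (u x : A) (φ : A →ₗ[k] N) : rightTranslation k A N u φ x = φ (x * u) := rfl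

namespace NegMod

variable (N : NegMod C)

/-- The `U⁻U⁰`-linear maps `U → N`, where `U⁰` acts on `N` through `weightAct`. -/
def linearMaps : Submodule k (C.U →ₗ[k] N.M) where
  carrier := {φ | (∀ (a : C.Um) (x : C.U), φ (a * x) = N.ρ a (φ x)) ∧
    ∀ (s : C.U0) (x : C.U), φ (s * x) = N.weightAct s (φ x)}
  add_mem' hφ hψ := ⟨fun a x => by simp only [LinearMap.add_apply, hφ.1, hψ.1, map_add],
    fun s x => by simp only [LinearMap.add_apply, hφ.2, hψ.2, map_add]⟩
  zero_mem' := ⟨fun a x => by simp only [LinearMap.zero_apply, map_zero],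
    fun s x => by simp only [LinearMap.zero_apply, map_zero]⟩
  smul_mem' c _ hφ := ⟨fun a x => by simp only [LinearMap.smul_apply, hφ.1, map_smul],
    fun s x => by simp only [LinearMap.smul_apply, hφ.2, map_smul]⟩

/-- The component of degree `lam` of the coinduced module. -/
def coindDeg (lam : Fin θ → ℤ) : Submodule k (C.U →ₗ[k] N.M) :=
  N.linearMaps ⊓ homDeg C.grade N.gr lam

theorem iSupIndep_coindDeg : iSupIndep N.coindDeg :=
  (iSupIndep_homDeg C.internal.submodule_iSup_eq_top N.internal.submodule_iSupIndep).mono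
    fun _ => inf_le_right

theorem rightTranslation_mem_coindDeg {ν lam : Fin θ → ℤ} {u : C.U} {φ : C.U →ₗ[k] N.M}
    (hu : u ∈ C.grade ν) (hφ : φ ∈ N.coindDeg lam) :
    rightTranslation k C.U N.M u φ ∈ N.coindDeg (ν + lam) := by
  refine ⟨⟨fun a x => ?_, fun s x => ?_⟩, fun η x hx => ?_⟩
  · rw [rightTranslation_apply, mul_assoc, hφ.1.1, rightTranslation_apply]
  · rw [rightTranslation_apply, mul_assoc, hφ.1.2, rightTranslation_apply]
  · rw [rightTranslation_apply, ← add_assoc]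
    exact hφ.2 _ _ (C.mul_mem hx hu)

theorem rightTranslation_mem_iSup_coindDeg (u : C.U) :
    ∀ φ ∈ ⨆ lam, N.coindDeg lam, rightTranslation k C.U N.M u φ ∈ ⨆ lam, N.coindDeg lam := by
  have hu : u ∈ ⨆ ν, C.grade ν := C.internal.submodule_iSup_eq_top ▸ Submodule.mem_top
  induction hu using Submodule.iSup_induction' with
  | zero => intro φ _; rw [map_zero]; exact zero_mem _
  | add u v _ _ hu hv => intro φ hφ; rw [map_add]; exact add_mem (hu φ hφ) (hv φ hφ)
  | mem ν u hu =>
    refine fun φ hφ => (iSup_le fun lam φ hφ => ?_ :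
      ⨆ lam, N.coindDeg lam ≤ (⨆ lam, N.coindDeg lam).comap (rightTranslation k C.U N.M u)) hφ
    exact le_iSup N.coindDeg (ν + lam) (N.rightTranslation_mem_coindDeg hu hφ)

theorem finiteDimensional_linearMaps : FiniteDimensional k N.linearMaps := by
  have := C.finUp
  refine Module.Finite.of_injective
    (LinearMap.lcomp k N.M C.Up.val.toLinearMap ∘ₗ N.linearMaps.subtype) ?_
  refine LinearMap.ker_eq_bot.1 (LinearMap.ker_eq_bot'.2 fun φ hφ => Subtype.ext ?_)
  refine C.linearMap_ext fun _ a _ x hx => ?_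
  suffices hx0 : (φ : C.U →ₗ[k] N.M) x = 0 by
    rw [φ.2.1, hx0, map_zero, ZeroMemClass.coe_zero, LinearMap.zero_apply]
  refine Submodule.mul_le (P := LinearMap.ker (φ : C.U →ₗ[k] N.M)).2 (fun s hs b hb => ?_) hx
  have hb0 : (φ : C.U →ₗ[k] N.M) b = 0 := LinearMap.congr_fun hφ ⟨b, hb⟩
  rw [LinearMap.mem_ker, φ.2.2 ⟨s, hs⟩, hb0, map_zero]

theorem rightTranslation_U0_apply {lam : Fin θ → ℤ} {φ : C.U →ₗ[k] N.M} (hφ : φ ∈ N.coindDeg lam)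
    (s : C.U0) : rightTranslation k C.U N.M s φ = C.π (C.tilde lam s) • φ := by
  refine linearMap_ext_of_iSup_eq_top C.internal.submodule_iSup_eq_top fun ν x hx => ?_
  have hcomm : x * s = C.tilde (-ν) s * x := by
    rw [C.tilde_comm ν x hx, ← AlgEquiv.trans_apply, ← C.tilde_add, neg_add_cancel, C.tilde_zero,
      AlgEquiv.coe_refl, id]
  rw [rightTranslation_apply, hcomm, hφ.1.2, N.weightAct_apply _ (hφ.2 ν x hx),
    ← AlgEquiv.trans_apply, ← C.tilde_add, neg_add_cancel_left, LinearMap.smul_apply]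

/-- The coinduced module: the `U⁻U⁰`-linear maps `U → N` that are sums of homogeneous ones, on which
`U` acts by right translation. -/
noncomputable def coind : CMod C where
  M := ↥(⨆ lam, N.coindDeg lam)
  ρ := restrictRep (rightTranslation k C.U N.M) _ N.rightTranslation_mem_iSup_coindDeg
  grM lam := (N.coindDeg lam).comap (⨆ lam, N.coindDeg lam).subtype
  internal := isInternal_comap_subtype N.iSupIndep_coindDeg
    (iSup_congr fun lam => (inf_eq_right.2 (le_iSup N.coindDeg lam)).symm)
  fin := by
    have := N.finiteDimensional_linearMaps
    exact Submodule.finiteDimensional_of_le (iSup_le fun _ => inf_le_left : _ ≤ N.linearMaps)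
  act_graded _ _ _ _ hu hφ := N.rightTranslation_mem_coindDeg hu hφ
  act_U0 s _ _ hφ := Subtype.ext (N.rightTranslation_U0_apply hφ s)

end NegMod

namespace NegMod

open Subalgebra (toSubmodule)

/-- The map `U → N` with `a x ↦ a · τ(x)` for `a ∈ U⁻` and `x ∈ U⁰U⁺`. -/
noncomputable def extend (N : NegMod C) (τ : C.U →ₗ[k] N.M) : C.U →ₗ[k] N.M :=
  TensorProduct.lift (N.ρ.toLinearMap.compl₂ (τ ∘ₗ C.mulU0Up)) ∘ₗ
    (LinearEquiv.ofBijective _ C.triangular).symm.toLinearMap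

theorem extend_mul (N : NegMod C) (τ : C.U →ₗ[k] N.M) (a : C.Um) {x : C.U}
    (hx : x ∈ toSubmodule C.U0 * toSubmodule C.Up) : N.extend τ (a * x) = N.ρ a (τ x) := by
  obtain ⟨t, rfl⟩ := C.range_mulU0Up ▸ hx
  have hsymm : (LinearEquiv.ofBijective _ C.triangular).symm (a * C.mulU0Up t) = a ⊗ₜ[k] t :=
    (LinearEquiv.symm_apply_eq _).2 rfl
  rw [extend, LinearMap.comp_apply, LinearEquiv.coe_coe, hsymm, TensorProduct.lift.tmul]
  rfl

variable {A B : NegMod C} {σ : B.M →ₗ[k] A.M} {φ : C.U →ₗ[k] B.M}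

theorem extend_mem_linearMaps (hσ : PreservesGrading B.gr A.gr σ) (hφ : φ ∈ B.linearMaps) :
    A.extend (σ ∘ₗ φ) ∈ A.linearMaps := by
  refine ⟨fun a x => ?_, fun s x => ?_⟩
  · refine LinearMap.congr_fun (f := A.extend (σ ∘ₗ φ) ∘ₗ LinearMap.mulLeft k (a : C.U))
      (g := A.ρ a ∘ₗ A.extend (σ ∘ₗ φ)) (C.linearMap_ext fun _ b _ x hx => ?_) x
    simp only [LinearMap.comp_apply, LinearMap.mulLeft_apply, extend_mul A _ b hx]
    rw [← mul_assoc, ← MulMemClass.coe_mul, extend_mul A _ _ hx, map_mul, Module.End.mul_apply,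
      LinearMap.comp_apply]
  · refine LinearMap.congr_fun (f := A.extend (σ ∘ₗ φ) ∘ₗ LinearMap.mulLeft k (s : C.U))
      (g := A.weightAct s ∘ₗ A.extend (σ ∘ₗ φ)) (C.linearMap_ext fun ν b hb x hx => ?_) x
    have hsx : C.tilde ν s * x ∈ toSubmodule C.U0 * toSubmodule C.Up := by
      refine (mul_assoc (toSubmodule C.U0) _ _).symm.trans_le ?_
        (Submodule.mul_mem_mul (C.tilde ν s).2 hx)
      rw [(Subalgebra.isIdempotentElem_toSubmodule C.U0).eq]
    simp only [LinearMap.comp_apply, LinearMap.mulLeft_apply, extend_mul A _ b hx]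
    rw [← mul_assoc, C.tilde_comm ν b hb, mul_assoc, extend_mul A _ b hsx, weightAct_act A hb,
      LinearMap.comp_apply, hφ.2, weightAct, weightAct,
      hσ.map_diagonalEnd B.internal A.internal]

theorem extend_mem_homDeg (hσ : PreservesGrading B.gr A.gr σ) {lam : Fin θ → ℤ}
    (hφ : φ ∈ homDeg C.grade B.gr lam) :
    A.extend (σ ∘ₗ φ) ∈ homDeg C.grade A.gr lam := by
  intro ν
  rw [C.grade_eq_iSup_mul]
  refine fun x hx => (iSup_le fun η => Submodule.mul_le.2 fun a ha x hx => ?_ :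
    _ ≤ (A.gr (ν + lam)).comap (A.extend (σ ∘ₗ φ))) hx
  have hx' := (mul_le_mul' le_rfl inf_le_left : _ ≤ toSubmodule C.U0 * toSubmodule C.Up) hx
  have hmem := A.act_graded (a := ⟨a, ha.1⟩) ha.2
    (hσ _ _ (hφ _ x (C.U0_mul_Up_inf_grade_le _ hx)))
  rw [← add_assoc, add_sub_cancel] at hmem
  rwa [Submodule.mem_comap, extend_mul A _ ⟨a, ha.1⟩ hx']

theorem comp_extend {g : A.M →ₗ[k] B.M} (hg : IsNegHom A B g) (hgσ : g ∘ₗ σ = LinearMap.id)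
    (hφ : φ ∈ B.linearMaps) : g ∘ₗ A.extend (σ ∘ₗ φ) = φ :=
  C.linearMap_ext fun _ a _ x hx => by
    rw [LinearMap.comp_apply, extend_mul A _ a hx, hg.map_act, hφ.1, LinearMap.comp_apply,
      ← LinearMap.comp_apply g, hgσ, LinearMap.id_apply]

theorem comp_mem_coindDeg {g : A.M →ₗ[k] B.M} (hg : IsNegHom A B g) {lam : Fin θ → ℤ}
    {ψ : C.U →ₗ[k] A.M} (hψ : ψ ∈ A.coindDeg lam) : g ∘ₗ ψ ∈ B.coindDeg lam := by
  refine ⟨⟨fun a x => ?_, fun s x => ?_⟩, fun ν x hx => hg.map_gr _ _ (hψ.2 ν x hx)⟩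
  · rw [LinearMap.comp_apply, hψ.1.1, hg.map_act, LinearMap.comp_apply]
  · rw [LinearMap.comp_apply, hψ.1.2, weightAct, hg.map_gr.map_diagonalEnd A.internal B.internal,
      LinearMap.comp_apply, weightAct]

/-- The functor `coind` on morphisms. -/
noncomputable def coindMap {g : A.M →ₗ[k] B.M} (hg : IsNegHom A B g) :
    A.coind.M →ₗ[k] B.coind.M :=
  (LinearMap.llcomp k C.U A.M B.M g).restrict
    (iSup_le fun lam _ hψ => le_iSup B.coindDeg lam (comp_mem_coindDeg hg hψ) :
      ⨆ lam, A.coindDeg lam ≤ (⨆ lam, B.coindDeg lam).comap (LinearMap.llcomp k C.U A.M B.M g))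

theorem isCHom_coindMap {g : A.M →ₗ[k] B.M} (hg : IsNegHom A B g) :
    IsCHom A.coind B.coind (coindMap hg) :=
  ⟨fun _ _ => rfl, fun _ _ hψ => comp_mem_coindDeg hg hψ⟩

theorem coindMap_surjective {g : A.M →ₗ[k] B.M} (hg : IsNegHom A B g)
    (hσ : PreservesGrading B.gr A.gr σ) (hgσ : g ∘ₗ σ = LinearMap.id) :
    Function.Surjective (coindMap hg) := by
  have hle : ⨆ lam, B.coindDeg lam ≤
      (⨆ lam, A.coindDeg lam).map (LinearMap.llcomp k C.U A.M B.M g) :=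
    iSup_le fun lam φ hφ => ⟨A.extend (σ ∘ₗ φ), le_iSup A.coindDeg lam
      ⟨extend_mem_linearMaps hσ hφ.1, extend_mem_homDeg hσ hφ.2⟩, comp_extend hg hgσ hφ.1⟩
  rintro ⟨φ, hφ⟩
  obtain ⟨ψ, hψ, hψφ⟩ := hle hφ
  exact ⟨⟨ψ, hψ⟩, Subtype.ext hψφ⟩

/-- Evaluation at `1`, the counit of the adjunction between restriction to `U⁻` and `coind`. -/
noncomputable def evalOne (N : NegMod C) : N.coind.M →ₗ[k] N.M :=
  LinearMap.applyₗ (1 : C.U) ∘ₗ (⨆ lam, N.coindDeg lam).subtype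

theorem isNegHom_evalOne (N : NegMod C) : IsNegHom N.coind.toNegMod N N.evalOne where
  map_act a φ := by
    have hφ : φ.1 ∈ N.linearMaps :=
      (iSup_le fun _ => inf_le_left : ⨆ lam, N.coindDeg lam ≤ N.linearMaps) φ.2
    exact (congrArg _ ((one_mul _).trans (mul_one _).symm)).trans (hφ.1 a 1)
  map_gr lam φ hφ := zero_add lam ▸ hφ.2 0 1 C.one_mem

end NegMod

namespace IsNegHom

variable {P : CMod C} {N : NegMod C} {f : P.M →ₗ[k] N.M}

theorem orbit_mem_coindDeg (hf : IsNegHom P.toNegMod N f) {lam : Fin θ → ℤ}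
    {p : P.M} (hp : p ∈ P.grM lam) : f ∘ₗ actVec P p ∈ N.coindDeg lam := by
  refine ⟨⟨fun a x => ?_, fun s x => ?_⟩, fun ν x hx => hf.map_gr _ _ (P.act_graded _ _ x p hx hp)⟩
  · exact (congrArg f (LinearMap.congr_fun (map_mul P.ρ a.1 x) p)).trans (hf.map_act a _)
  · refine (congrArg f (LinearMap.congr_fun (map_mul P.ρ s.1 x) p)).trans ?_
    rw [Module.End.mul_apply, P.act_U0_eq_weightAct]
    exact hf.map_gr.map_diagonalEnd P.internal N.internal _ _

/-- The morphism `p ↦ (u ↦ f(u p))` adjoint to a morphism `f` from the restriction of `P`. -/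
noncomputable def toCoind (hf : IsNegHom P.toNegMod N f) :
    P.M →ₗ[k] N.coind.M :=
  (P.ρ.toLinearMap.flip.compr₂ f).codRestrict (⨆ lam, N.coindDeg lam) fun _ =>
    (iSup_le fun lam _ hp => le_iSup N.coindDeg lam (hf.orbit_mem_coindDeg hp) :
      ⨆ lam, P.grM lam ≤ (⨆ lam, N.coindDeg lam).comap (P.ρ.toLinearMap.flip.compr₂ f))
      (P.internal.submodule_iSup_eq_top ▸ Submodule.mem_top)

theorem isCHom_toCoind (hf : IsNegHom P.toNegMod N f) :
    IsCHom P N.coind hf.toCoind :=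
  ⟨fun u p => Subtype.ext <| LinearMap.ext fun x =>
      congrArg f (LinearMap.congr_fun (map_mul P.ρ x u) p).symm,
    fun _ _ hp => hf.orbit_mem_coindDeg hp⟩

theorem evalOne_toCoind (hf : IsNegHom P.toNegMod N f) (p : P.M) :
    N.evalOne (hf.toCoind p) = f p :=
  congrArg f (LinearMap.congr_fun (map_one P.ρ) p)

end IsNegHom

/-- `P / F` is projective as a graded `U⁻`-module, expressed through morphisms out of `P` that kill
`F`. Epimorphisms are given with a graded `k`-linear section, which always exists over a field. -/
def NegMod.IsProjectiveModulo (P : NegMod C) (F : Submodule k P.M) : Prop :=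
  ∀ ⦃A B : NegMod C⦄ ⦃g : A.M →ₗ[k] B.M⦄ ⦃σ : B.M →ₗ[k] A.M⦄, IsNegHom A B g →
    PreservesGrading B.gr A.gr σ → g ∘ₗ σ = LinearMap.id →
    ∀ ⦃f : P.M →ₗ[k] B.M⦄, IsNegHom P B f → F ≤ LinearMap.ker f →
      ∃ h : P.M →ₗ[k] A.M, IsNegHom P A h ∧ F ≤ LinearMap.ker h ∧ g ∘ₗ h = f

theorem IsCHom.isNegHom {P Q : CMod C} {f : P.M →ₗ[k] Q.M} (hf : IsCHom P Q f) :
    IsNegHom P.toNegMod Q.toNegMod f :=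
  ⟨fun a p => hf.1 a p, hf.2⟩

theorem CProjective.isProjectiveModulo_bot {P : CMod C} (hP : CProjective P) :
    P.toNegMod.IsProjectiveModulo ⊥ := by
  intro A B g σ hg hσ hgσ f hf _
  obtain ⟨h, hh, hgh⟩ := hP A.coind B.coind (NegMod.coindMap hg) (NegMod.isCHom_coindMap hg)
    (NegMod.coindMap_surjective hg hσ hgσ) hf.toCoind hf.isCHom_toCoind
  refine ⟨A.evalOne ∘ₗ h, A.isNegHom_evalOne.comp hh.isNegHom, bot_le, LinearMap.ext fun p => ?_⟩
  exact (congrArg B.evalOne (LinearMap.congr_fun hgh p)).trans (hf.evalOne_toCoind p)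

/-! ### The regular and trivial `U⁻`-modules -/

namespace NegMod

/-- The regular representation of `U⁻`, with `1` in degree `μ`. -/
def regular (C : AJSCtx k θ) (μ : Fin θ → ℤ) : NegMod C where
  M := C.Um
  ρ := Algebra.lmul k C.Um
  gr lam := C.gradeUm (lam - μ)
  internal := by
    rw [DirectSum.isInternal_submodule_iff_iSupIndep_and_iSup_eq_top]
    exact ⟨C.isInternal_gradeUm.submodule_iSupIndep.comp sub_left_injective,
      ((Equiv.subRight μ).iSup_comp (g := C.gradeUm)).trans
        C.isInternal_gradeUm.submodule_iSup_eq_top⟩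
  fin := C.finUm
  act_graded ha hm := (add_sub_assoc _ _ μ).symm ▸ C.mul_mem ha hm

/-- The one-dimensional `U⁻`-module in degree `μ` on which `U⁻` acts by an augmentation. -/
def ofAugmentation {ε : C.Um →ₐ[k] k} (hε : AJSCtx.IsAugmentation ε) (μ : Fin θ → ℤ) :
    NegMod C where
  M := k
  ρ := (Algebra.lmul k k).comp ε
  gr lam := ⨆ _ : lam = μ, ⊤
  internal := by
    rw [DirectSum.isInternal_submodule_iff_iSupIndep_and_iSup_eq_top]
    refine ⟨fun lam => ?_, iSup_iSup_eq_left⟩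
    rcases eq_or_ne lam μ with rfl | hlam
    · refine disjoint_bot_right.mono_right (iSup₂_le fun η hη => (iSup_neg hη).le)
    · exact disjoint_bot_left.mono_left (iSup_neg hlam).le
  fin := inferInstance
  act_graded := by
    intro ν lam a x ha hx
    rcases eq_or_ne ν 0 with rfl | hν
    · rw [zero_add]
      exact Submodule.smul_mem _ (ε a) hx
    · rw [AlgHom.comp_apply, hε ν hν a ha, map_zero]
      exact zero_mem _

theorem mem_ofAugmentation_gr {ε : C.Um →ₐ[k] k} (hε : AJSCtx.IsAugmentation ε) {μ lam : Fin θ → ℤ}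
    {x : k} : x ∈ (ofAugmentation hε μ).gr lam ↔ lam = μ ∨ x = 0 := by
  rcases eq_or_ne lam μ with rfl | hlam
  · exact iff_of_true (Submodule.mem_iSup_of_mem rfl Submodule.mem_top) (Or.inl rfl)
  · change x ∈ (⨆ _ : lam = μ, (⊤ : Submodule k k)) ↔ _
    rw [iSup_neg hlam, Submodule.mem_bot, or_iff_right hlam]

theorem isNegHom_augmentation {ε : C.Um →ₐ[k] k} (hε : AJSCtx.IsAugmentation ε) (μ : Fin θ → ℤ) :
    IsNegHom (regular C μ) (ofAugmentation hε μ) ε.toLinearMap where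
  map_act a x := map_mul ε a x
  map_gr lam x hx := (mem_ofAugmentation_gr hε).2 <|
    (eq_or_ne lam μ).imp_right fun hlam => hε _ (sub_ne_zero.2 hlam) x hx

theorem preservesGrading_algebraMap {ε : C.Um →ₐ[k] k} (hε : AJSCtx.IsAugmentation ε)
    (μ : Fin θ → ℤ) : PreservesGrading (ofAugmentation hε μ).gr (regular C μ).gr
      (Algebra.linearMap k C.Um) := by
  intro lam (c : k) hc
  rcases (mem_ofAugmentation_gr hε).1 hc with rfl | rfl
  · have hone : (1 : C.Um) ∈ C.gradeUm (lam - lam) := (sub_self lam).symm ▸ C.one_mem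
    exact Algebra.algebraMap_eq_smul_one (A := C.Um) c ▸ Submodule.smul_mem _ c hone
  · exact (map_zero (Algebra.linearMap k C.Um)).symm ▸ zero_mem (C.gradeUm (lam - μ))

variable {P : NegMod C} {F : Submodule k P.M} {μ : Fin θ → ℤ} {v : P.M}

theorem isNegHom_ofAugmentation {ε : C.Um →ₐ[k] k} (hε : AJSCtx.IsAugmentation ε)
    (hstable : ∀ a, ∀ m ∈ F, P.ρ a m ∈ F) (hμ : ∀ lam > μ, P.gr lam ≤ F) {f : P.M →ₗ[k] k}
    (hfF : F ≤ LinearMap.ker f) (hf : ∀ lam ≠ μ, P.gr lam ≤ LinearMap.ker f) :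
    IsNegHom P (ofAugmentation hε μ) f where
  map_act a m := by
    refine LinearMap.congr_fun₂ (f := P.ρ.toLinearMap.compr₂ f)
      (g := (LinearMap.mul k k).compl₁₂ ε.toLinearMap f)
      (linearMap_ext_of_iSup_eq_top C.isInternal_gradeUm.submodule_iSup_eq_top fun ν a ha => ?_) a m
    refine linearMap_ext_of_iSup_eq_top P.internal.submodule_iSup_eq_top fun lam x hx => ?_
    change f (P.ρ a x) = ε a * f x
    rcases eq_or_ne ν 0 with rfl | hν
    · rw [AJSCtx.eq_algebraMap_of_mem_gradeUm_zero ε ha, AlgHom.commutes, AlgHom.commutes,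
        Module.algebraMap_end_apply, map_smul, smul_eq_mul, Algebra.algebraMap_self_apply]
    rw [hε ν hν a ha, zero_mul]
    rcases eq_or_ne a 0 with rfl | ha0
    · rw [map_zero, LinearMap.zero_apply, map_zero]
    rcases eq_or_ne (ν + lam) μ with rfl | hne
    · have hlt : ν + lam < lam :=
        add_lt_of_neg_left lam ((AJSCtx.nonpos_of_mem_gradeUm ha ha0).lt_of_ne hν)
      exact hfF (hstable a x (hμ lam hlt hx))
    · exact hf _ hne (P.act_graded ha hx)
  map_gr lam x hx := (mem_ofAugmentation_gr hε).2 <|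
    (eq_or_ne lam μ).imp_right fun hlam => hf lam hlam hx

theorem IsProjectiveModulo.exists_retraction (hP : P.IsProjectiveModulo F)
    (hgraded : F = ⨆ lam, F ⊓ P.gr lam) (hstable : ∀ a, ∀ m ∈ F, P.ρ a m ∈ F)
    (hμ : ∀ lam > μ, P.gr lam ≤ F) (hv : v ∈ P.gr μ) (hvF : v ∉ F) :
    ∃ h : P.M →ₗ[k] C.Um, IsNegHom P (regular C μ) h ∧ F ≤ LinearMap.ker h ∧ h v = 1 := by
  have : Nontrivial C.U := by
    by_contra hU
    rw [not_nontrivial_iff_subsingleton] at hU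
    have hone : (1 : C.Um) = 0 := Subtype.ext (Subsingleton.elim _ _)
    refine hvF ?_
    rw [← Module.End.one_apply (R := k) v, ← map_one P.ρ, hone, map_zero]
    exact zero_mem F
  obtain ⟨ε, hε⟩ := AJSCtx.exists_isAugmentation (C := C)
  obtain ⟨f, hfv, hfF, hf⟩ :=
    exists_functional_of_notMem P.internal.submodule_iSupIndep hgraded hv hvF
  obtain ⟨h, hh, hhF, rfl⟩ := hP (isNegHom_augmentation hε μ) (preservesGrading_algebraMap hε μ)
    (LinearMap.ext ε.commutes) (isNegHom_ofAugmentation hε hstable hμ hfF hf) hfF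
  have hdeg : h v ∈ C.gradeUm 0 := sub_self μ ▸ hh.map_gr μ v hv
  refine ⟨h, hh, hhF, ?_⟩
  exact (AJSCtx.eq_algebraMap_of_mem_gradeUm_zero ε hdeg).trans
    ((congrArg _ hfv).trans (map_one (algebraMap k C.Um)))

/-- Correcting a lift by `x ↦ h(x) · h'(v)`, where `h` is a retraction onto `U⁻ v`, makes it kill
`U⁻ v` without changing its image downstairs. -/
theorem IsProjectiveModulo.sup_range (hP : P.IsProjectiveModulo F) (hv : v ∈ P.gr μ)
    {h : P.M →ₗ[k] C.Um} (hh : IsNegHom P (regular C μ) h) (hhF : F ≤ LinearMap.ker h)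
    (hhv : h v = 1) : P.IsProjectiveModulo (F ⊔ LinearMap.range (P.ρ.toLinearMap.flip v)) := by
  intro A B g σ hg hσ hgσ f hf hfF
  obtain ⟨h', hh', hhF', rfl⟩ := hP hg hσ hgσ hf (le_sup_left.trans hfF)
  have hh_act : ∀ a x, h (P.ρ a x) = a * h x := hh.map_act
  have hgv : g (h' v) = 0 := hfF (le_sup_right (a := F) ⟨1, by
    rw [LinearMap.flip_apply, AlgHom.toLinearMap_apply, map_one, Module.End.one_apply]⟩)
  refine ⟨h' - A.ρ.toLinearMap.flip (h' v) ∘ₗ h, ⟨fun a x => ?_, fun lam x hx => ?_⟩,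
    sup_le (fun x hx => ?_) ?_, LinearMap.ext fun x => ?_⟩
  · simp only [LinearMap.sub_apply, LinearMap.comp_apply, LinearMap.flip_apply,
      AlgHom.toLinearMap_apply, hh'.map_act, hh_act, map_mul, Module.End.mul_apply, map_sub]
  · refine sub_mem (hh'.map_gr lam x hx) ?_
    have hmem := A.act_graded (hh.map_gr lam x hx) (hh'.map_gr μ v hv)
    rwa [sub_add_cancel] at hmem
  · rw [LinearMap.mem_ker, LinearMap.sub_apply, LinearMap.comp_apply, hhF' hx, hhF hx, map_zero,
      sub_zero]
  · rintro _ ⟨a, rfl⟩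
    simp only [LinearMap.mem_ker, LinearMap.sub_apply, LinearMap.comp_apply, LinearMap.flip_apply,
      AlgHom.toLinearMap_apply, hh'.map_act, hh_act, hhv, mul_one, sub_self]
  · simp only [LinearMap.sub_apply, LinearMap.comp_apply, LinearMap.flip_apply,
      AlgHom.toLinearMap_apply, map_sub, hg.map_act, hgv, map_zero, sub_zero]

end NegMod

/-! ### Subquotients and Verma modules -/

namespace CMod

open Subalgebra (toSubmodule)

variable {P : CMod C} {p q : Submodule k P.M}

theorem gradedSub.sup (hp : P.gradedSub p) (hq : P.gradedSub q) : P.gradedSub (p ⊔ q) :=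
  le_antisymm
    (sup_le (hp.trans_le (iSup_mono fun _ => inf_le_inf_right _ le_sup_left))
      (hq.trans_le (iSup_mono fun _ => inf_le_inf_right _ le_sup_right)))
    (iSup_le fun _ => inf_le_left)

theorem stable.sup (hp : P.stable p) (hq : P.stable q) : P.stable (p ⊔ q) := fun u =>
  (sup_le (fun x hx => Submodule.mem_sup_left (hp u x hx))
    (fun x hx => Submodule.mem_sup_right (hq u x hx)) : p ⊔ q ≤ (p ⊔ q).comap (P.ρ u))

theorem gradedSub_range_actVec {μ : Fin θ → ℤ} {v : P.M} (hv : v ∈ P.grM μ) :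
    P.gradedSub (LinearMap.range (actVec P v)) := by
  refine le_antisymm ?_ (iSup_le fun _ => inf_le_left)
  rw [LinearMap.range_eq_map, ← C.internal.submodule_iSup_eq_top, Submodule.map_iSup]
  refine iSup_le fun ν => le_iSup_of_le (ν + μ)
    (le_inf (le_iSup (fun ν => (C.grade ν).map (actVec P v)) ν) ?_)
  exact Submodule.map_le_iff_le_comap.2 fun u hu => P.act_graded ν μ u v hu hv

theorem stable_range_actVec (P : CMod C) (v : P.M) : P.stable (LinearMap.range (actVec P v)) := by
  rintro u _ ⟨x, rfl⟩
  exact ⟨u * x, LinearMap.congr_fun (map_mul P.ρ u x) v⟩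

/-- A graded `U`-submodule, as an object of `C_k`. -/
def sub (P : CMod C) (p : Submodule k P.M) (hp : P.gradedSub p) (hps : P.stable p) : CMod C where
  M := p
  ρ := restrictRep P.ρ p hps
  grM ν := (P.grM ν).comap p.subtype
  internal := isInternal_comap_subtype P.internal.submodule_iSupIndep hp
  fin := inferInstance
  act_graded ν μ u x hu hx := P.act_graded ν μ u x hu hx
  act_U0 s μ x hx := Subtype.ext (P.act_U0 s μ x hx)

/-- The quotient by a graded `U`-submodule, as an object of `C_k`. -/
def quotient (P : CMod C) (q : Submodule k P.M) (hq : P.gradedSub q) (hqs : P.stable q) :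
    CMod C where
  M := P.M ⧸ q
  ρ := quotientRep P.ρ q hqs
  grM ν := (P.grM ν).map q.mkQ
  internal := isInternal_map_mkQ P.internal hq
  fin := inferInstance
  act_graded := by
    rintro ν μ u _ hu ⟨x, hx, rfl⟩
    exact Submodule.mem_map_of_mem (P.act_graded ν μ u x hu hx)
  act_U0 := by
    rintro s μ _ ⟨x, hx, rfl⟩
    exact congrArg q.mkQ (P.act_U0 s μ x hx)

theorem gradedSub.submoduleOf (hq : P.gradedSub q) (hqp : q ≤ p) (hp : P.gradedSub p)
    (hps : P.stable p) : (P.sub p hp hps).gradedSub (q.submoduleOf p) := by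
  apply Submodule.map_injective_of_injective p.injective_subtype
  have hmap : ∀ {r : Submodule k P.M}, r ≤ q → (r.submoduleOf p).map p.subtype = r := fun hr =>
    (Submodule.map_comap_subtype _ _).trans (inf_eq_right.2 (hr.trans hqp))
  rw [hmap le_rfl]
  refine hq.trans (((Submodule.map_iSup _ _).trans (iSup_congr fun ν => ?_)).symm)
  exact hmap (r := q ⊓ P.grM ν) inf_le_left

/-- The subquotient `p / q`, as an object of `C_k`. -/
def subquotient (hqp : q ≤ p) (hp : P.gradedSub p) (hps : P.stable p) (hq : P.gradedSub q)
    (hqs : P.stable q) : CMod C :=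
  (P.sub p hp hps).quotient (q.submoduleOf p) (hq.submoduleOf hqp hp hps) fun u x hx => hqs u x.1 hx

theorem subquotIso_subquotient (hqp : q ≤ p) (hp : P.gradedSub p) (hps : P.stable p)
    (hq : P.gradedSub q) (hqs : P.stable q) :
    SubquotIso P p q (subquotient hqp hp hps hq hqs) :=
  ⟨(q.submoduleOf p).mkQ, Submodule.mkQ_surjective _,
    fun _ => Submodule.Quotient.mk_eq_zero (q.submoduleOf p), fun _ _ _ => rfl,
    fun _ _ hx => ⟨_, hx, rfl⟩⟩

theorem isVerma_subquotient (hqp : q ≤ p) (hp : P.gradedSub p) (hps : P.stable p)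
    (hq : P.gradedSub q) (hqs : P.stable q) {μ : Fin θ → ℤ} {v : P.M} (hv : v ∈ P.grM μ)
    (hvp : v ∈ p) (hUp : ∀ ν ≠ 0, ∀ b ∈ C.gradeUp ν, P.ρ b v ∈ q)
    (hinj : ∀ a : C.Um, P.ρ a v ∈ q → a = 0)
    (hpv : p ≤ q ⊔ LinearMap.range (actVec P v ∘ₗ C.Um.val.toLinearMap)) :
    IsVerma μ (subquotient hqp hp hps hq hqs) ((q.submoduleOf p).mkQ ⟨v, hvp⟩) := by
  refine ⟨⟨⟨⟨v, hvp⟩, hv, rfl⟩, fun ν hν b hb => ?_⟩,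
    (injective_iff_map_eq_zero _).2 fun a ha => ?_, ?_⟩
  · exact (Submodule.Quotient.mk_eq_zero (q.submoduleOf p)).2 (hUp ν hν ⟨b, hb.1⟩ hb.2)
  · exact hinj a ((Submodule.Quotient.mk_eq_zero (q.submoduleOf p)).1 ha)
  · rintro ⟨x, hx⟩
    obtain ⟨y, hy, _, ⟨a, rfl⟩, hyx⟩ := Submodule.mem_sup.1 (hpv hx)
    refine ⟨a, ((Submodule.Quotient.eq (q.submoduleOf p)).2 ?_).symm⟩
    change x - P.ρ a v ∈ q
    exact hyx ▸ (add_sub_cancel_right y _).symm ▸ hy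

variable {F : Submodule k P.M} {μ : Fin θ → ℤ} {v : P.M}

theorem act_mem_of_mem_gradeUp (hμ : ∀ lam > μ, P.grM lam ≤ F) (hv : v ∈ P.grM μ)
    {ν : Fin θ → ℤ} (hν : ν ≠ 0) {b : C.Up} (hb : b ∈ C.gradeUp ν) : P.ρ b v ∈ F := by
  rcases eq_or_ne b 0 with rfl | hb0
  · rw [ZeroMemClass.coe_zero, map_zero]
    exact zero_mem F
  · have hlt : μ < ν + μ :=
      lt_add_of_pos_left μ ((AJSCtx.nonneg_of_mem_gradeUp hb hb0).lt_of_ne' hν)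
    exact hμ _ hlt (P.act_graded ν μ b v hb hv)

theorem U0_mul_Up_le_comap_actVec (hF : P.stable F) (hμ : ∀ lam > μ, P.grM lam ≤ F)
    (hv : v ∈ P.grM μ) : toSubmodule C.U0 * toSubmodule C.Up ≤
      (F ⊔ Submodule.span k {v}).comap (actVec P v) := by
  rw [C.Up_graded, Submodule.mul_iSup]
  refine iSup_le fun ν => Submodule.mul_le.2 fun s hs b hb => ?_
  change P.ρ (s * b) v ∈ F ⊔ Submodule.span k {v}
  rw [map_mul, Module.End.mul_apply]
  rcases eq_or_ne ν 0 with rfl | hν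
  · obtain ⟨c, hc⟩ := AJSCtx.exists_eq_algebraMap_of_mem_gradeUp_zero (b := ⟨b, hb.1⟩) hb.2
    obtain rfl : b = algebraMap k C.U c := congrArg Subtype.val hc
    rw [AlgHom.commutes, Module.algebraMap_end_apply, map_smul, P.act_U0 ⟨s, hs⟩ μ v hv, smul_smul]
    exact Submodule.mem_sup_right (Submodule.smul_mem _ _ (Submodule.mem_span_singleton_self v))
  · exact Submodule.mem_sup_left (hF s _ (act_mem_of_mem_gradeUp (b := ⟨b, hb.1⟩) hμ hv hν hb.2))

theorem range_actVec_le (hF : P.stable F) (hμ : ∀ lam > μ, P.grM lam ≤ F) (hv : v ∈ P.grM μ) :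
    LinearMap.range (actVec P v) ≤ F ⊔ LinearMap.range (actVec P v ∘ₗ C.Um.val.toLinearMap) := by
  rw [LinearMap.range_eq_map, ← C.Um_mul_U0_mul_Up_eq_top, Submodule.map_le_iff_le_comap]
  refine Submodule.mul_le.2 fun a ha x hx => ?_
  obtain ⟨y, hy, _, hz, hyz⟩ := Submodule.mem_sup.1 (U0_mul_Up_le_comap_actVec hF hμ hv hx)
  obtain ⟨c, rfl⟩ := Submodule.mem_span_singleton.1 hz
  have hax : actVec P v (a * x) = P.ρ a y + c • P.ρ a v := by
    rw [← map_smul, ← map_add, hyz]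
    exact LinearMap.congr_fun (map_mul P.ρ a x) v
  rw [Submodule.mem_comap, hax]
  exact Submodule.add_mem_sup (hF a y hy) (Submodule.smul_mem _ c ⟨⟨a, ha⟩, rfl⟩)

theorem exists_maximal_weight (hF : F ≠ ⊤) :
    ∃ μ, ¬ P.grM μ ≤ F ∧ ∀ lam > μ, P.grM lam ≤ F := by
  have hfin : {μ | ¬ P.grM μ ≤ F}.Finite :=
    (WellFoundedGT.finite_ne_bot_of_iSupIndep P.internal.submodule_iSupIndep).subset
      fun μ hμ h0 => hμ (h0.trans_le bot_le)
  have hne : {μ | ¬ P.grM μ ≤ F}.Nonempty := by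
    by_contra! hempty
    refine hF (top_unique (P.internal.submodule_iSup_eq_top ▸ iSup_le fun μ => ?_))
    exact not_not.1 (Set.eq_empty_iff_forall_notMem.1 hempty μ)
  obtain ⟨μ, hμ⟩ := hfin.exists_maximal hne
  exact ⟨μ, hμ.1, fun lam hlam => not_not.1 fun h => hμ.not_gt h hlam⟩

/-- A stage of the construction of a Verma filtration: a graded `U`-submodule of `P` modulo which
`P` is still projective over `U⁻`. -/
structure IsStage (P : CMod C) (F : Submodule k P.M) : Prop where
  gradedSub : P.gradedSub F
  stable : P.stable F
  isProjectiveModulo : P.toNegMod.IsProjectiveModulo F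

/-- The subquotient `p / q` of `P` is isomorphic to a Verma module of highest weight `μ`. -/
def IsVermaSubquot (P : CMod C) (μ : Fin θ → ℤ) (p q : Submodule k P.M) : Prop :=
  ∃ (Z : CMod C) (m : Z.M), IsVerma μ Z m ∧ SubquotIso P p q Z

theorem IsStage.exists_gt (hF : P.IsStage F) (hFtop : F ≠ ⊤) :
    ∃ F' > F, P.IsStage F' ∧ ∃ μ, P.IsVermaSubquot μ F' F := by
  obtain ⟨μ, hμF, hμ⟩ := exists_maximal_weight hFtop
  obtain ⟨v, hv, hvF⟩ := SetLike.not_le_iff_exists.1 hμF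
  obtain ⟨h, hh, hhF, hhv⟩ := hF.isProjectiveModulo.exists_retraction hF.gradedSub
    (fun a => hF.stable a) hμ hv hvF
  have hhav : ∀ a : C.Um, h (P.ρ a v) = a := fun a =>
    (hh.map_act a v).trans ((congrArg (a * ·) hhv).trans (mul_one a))
  have hvmem : v ∈ F ⊔ LinearMap.range (actVec P v) :=
    Submodule.mem_sup_right ⟨1, LinearMap.congr_fun (map_one P.ρ) v⟩
  have hle : F ⊔ LinearMap.range (actVec P v) ≤
      F ⊔ LinearMap.range (actVec P v ∘ₗ C.Um.val.toLinearMap) :=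
    sup_le le_sup_left (range_actVec_le hF.stable hμ hv)
  have heq := hle.antisymm (sup_le_sup_left (LinearMap.range_comp_le_range _ _) F)
  have hgraded := hF.gradedSub.sup (gradedSub_range_actVec hv)
  have hstable := hF.stable.sup (stable_range_actVec P v)
  refine ⟨F ⊔ LinearMap.range (actVec P v), left_lt_sup.2 fun h => hvF ?_,
    ⟨hgraded, hstable, heq ▸ hF.isProjectiveModulo.sup_range hv hh hhF hhv⟩, μ, _, _,
    isVerma_subquotient le_sup_left hgraded hstable hF.gradedSub hF.stable hv hvmem
      (fun ν hν b hb => act_mem_of_mem_gradeUp hμ hv hν hb)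
      (fun a ha => (hhav a).symm.trans (hhF ha)) hle,
    subquotIso_subquotient le_sup_left hgraded hstable hF.gradedSub hF.stable⟩
  exact sup_eq_left.2 h ▸ hvmem

theorem IsStage.exists_relSeries (hF : P.IsStage F) :
    ∃ s : RelSeries {(G, G') : {G // P.IsStage G} × {G // P.IsStage G} |
        G.1 < G'.1 ∧ ∃ μ, P.IsVermaSubquot μ G'.1 G.1},
      s.head.1 = F ∧ s.last.1 = ⊤ := by
  induction F using WellFoundedGT.induction with
  | ind F ih =>
    rcases eq_or_ne F ⊤ with rfl | hFtop
    · exact ⟨RelSeries.singleton _ ⟨⊤, hF⟩, rfl, rfl⟩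
    obtain ⟨F', hlt, hF', hμ⟩ := hF.exists_gt hFtop
    obtain ⟨s, rfl, hs⟩ := ih F' hlt hF'
    exact ⟨s.cons ⟨F, hF⟩ ⟨hlt, hμ⟩, rfl, (congrArg Subtype.val (s.last_cons _ _)).trans hs⟩

end CMod


theorem projective_has_Z_filtration_general {k : Type} [Field k] {θ : ℕ} (C : AJSCtx k θ)
    (P : CMod C) (hP : CProjective P) :
    ∃ (r : ℕ) (F : Fin (r + 1) → Submodule k P.M) (μs : Fin r → (Fin θ → ℤ)),
      Monotone F ∧ F 0 = ⊥ ∧ F (Fin.last r) = ⊤ ∧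
      (∀ i, P.gradedSub (F i) ∧ P.stable (F i)) ∧
      ∀ i : Fin r, ∃ (Z : CMod C) (m : Z.M),
        IsVerma (μs i) Z m ∧ SubquotIso P (F i.succ) (F i.castSucc) Z := by
  have hbot : P.IsStage ⊥ :=
    { gradedSub := by simp only [CMod.gradedSub, bot_inf_eq, iSup_bot]
      stable := fun u m hm => (Submodule.mem_bot k).2 (by rw [(Submodule.mem_bot k).1 hm, map_zero])
      isProjectiveModulo := hP.isProjectiveModulo_bot }
  obtain ⟨s, hhead, hlast⟩ := hbot.exists_relSeries
  choose μs hμs using fun i => (s.step i).2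
  exact ⟨s.length, fun i => (s i).1, μs, Fin.monotone_iff_le_succ.2 fun i => (s.step i).1.le,
    hhead, hlast, fun i => ⟨(s i).2.gradedSub, (s i).2.stable⟩, hμs⟩

/-- **Projectives have Verma filtrations**: every projective object `P` of `C_k` admits a
chain of graded `U`-submodules `0 = F 0 ⊂ ⋯ ⊂ F r = P` whose successive quotients are
isomorphic in `C_k` to Verma modules `Z(μs i)`. -/
theorem projective_has_Z_filtration {k : Type} [Field k] [IsAlgClosed k] [CharZero k]
    {θ : ℕ} (hθ : 1 ≤ θ) (C : AJSCtx k θ)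
    (P : CMod C) (hP : CProjective P) :
    ∃ (r : ℕ) (F : Fin (r + 1) → Submodule k P.M) (μs : Fin r → (Fin θ → ℤ)),
      Monotone F ∧ F 0 = ⊥ ∧ F (Fin.last r) = ⊤ ∧
      (∀ i, P.gradedSub (F i) ∧ P.stable (F i)) ∧
      ∀ i : Fin r, ∃ (Z : CMod C) (m : Z.M),
        IsVerma (μs i) Z m ∧ SubquotIso P (F i.succ) (F i.castSucc) Z :=
  projective_has_Z_filtration_general C P hP
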